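/- Let m, n be nonzero integers. The Baumslag–Solitar group BS(m,n) is solvable if and only if min(|m|, |n|) = 1. -/

import Mathlib

/-! The group `BS(m,n)` is the HNN extension of `ℤ` whose stable letter `t` conjugates `nℤ` onto
`mℤ`: `t x^n t⁻¹ = x^m`.

If `|m|, |n| ≥ 2`, both associated subgroups are proper, and an HNN extension with two proper
associated subgroups is never solvable. Consider the elements represented by a reduced word that
begins with the letter `t` and ends with the letter `t⁻¹`. By Britton's lemma they are nontrivial.
If `g` is such an element and `b` lies outside the second associated subgroup `B`, then every
junction in `t ⁅g, b g b⁻¹⁆ t⁻¹ = t g b g b⁻¹ g⁻¹ b g⁻¹ b⁻¹ t⁻¹` is reduced, so this element is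
again of the same form. Since the terms of the derived series are normal, each of them contains an
element of this form (`exists_redWord_mem_derivedSeries`), so none of them is trivial.

If `|n| = 1`, then `x` is a power of `t⁻¹ x t`, so of the conjugates `t^k x t^{-k}` any two are
powers of a common one, and they commute. They generate an abelian normal subgroup whose quotient
is generated by `t`, so the group is metabelian. The case `|m| = 1` follows by exchanging `t` and
`t⁻¹`. -/

/-- The single relator of the Baumslag–Solitar group `BS(m,n)`:
`t⁻¹ x^m t x^{-n}`, where `x = FreeGroup.of true` and `t = FreeGroup.of false`. -/
def bsRels (m n : ℤ) : Set (FreeGroup Bool) :=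
  {(FreeGroup.of false)⁻¹ * (FreeGroup.of true) ^ m * FreeGroup.of false *
    (FreeGroup.of true) ^ (-n)}

/-- The Baumslag–Solitar group `BS(m,n) = ⟨x, t ∣ t⁻¹ x^m t = x^n⟩`. -/
def BS (m n : ℤ) : Type := PresentedGroup (bsRels m n)

instance (m n : ℤ) : Group (BS m n) := by unfold BS; infer_instance

/-- The image of the generator `x` in `BS(m,n)`. -/
def BS.x (m n : ℤ) : BS m n := PresentedGroup.of (rels := bsRels m n) true

/-- The image of the generator `t` in `BS(m,n)`. -/
def BS.t (m n : ℤ) : BS m n := PresentedGroup.of (rels := bsRels m n) false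

/-- A group is residually finite if every nontrivial element is detected by a
homomorphism to a finite group. -/
def IsResiduallyFinite (G : Type*) [Group G] : Prop :=
  ∀ g : G, g ≠ 1 → ∃ (H : Type) (_ : Group H) (_ : Finite H) (f : G →* H), f g ≠ 1

namespace HNNExtension

open NormalWord
open scoped commutatorElement

variable {G : Type*} [Group G] {A B : Subgroup G} {φ : A ≃* B}

variable (φ) in
/-- `RedWord φ u v g` says that `g` is the product of a nonempty reduced word whose first letter is
`t ^ u` and whose last letter is `t ^ v`, with trivial base-group part before the first and after
the last letter. In `glue`, the side condition forbids a pinch `t ^ v * of c * t ^ (-v)` with `c`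
in the subgroup associated to `v`. -/
inductive RedWord : ℤˣ → ℤˣ → HNNExtension G A B φ → Prop
  | letter (u : ℤˣ) : RedWord u u (t ^ (u : ℤ))
  | glue {u v u' v' : ℤˣ} {g h : HNNExtension G A B φ} (c : G)
      (hg : RedWord u v g) (hh : RedWord u' v' h) (hc : c ∈ toSubgroup A B v → v = u') :
      RedWord u v' (g * of c * h)

theorem RedWord.inv {u v : ℤˣ} {g : HNNExtension G A B φ} (h : RedWord φ u v g) :
    RedWord φ (-v) (-u) g⁻¹ := by
  induction h with
  | letter u => simpa using RedWord.letter (φ := φ) (-u)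
  | @glue u v u' v' g h c _ _ hc ihg ihh =>
    have := RedWord.glue c⁻¹ ihh ihg (by
      intro hmem
      by_contra hne
      -- opposite signs: `-u' = v`, so the inverted junction lies in the same subgroup
      have hv : -u' = v := by
        rcases Int.units_eq_one_or u' with rfl | rfl <;>
          rcases Int.units_eq_one_or v with rfl | rfl <;> simp_all
      rw [hv] at hmem
      exact hne (by rw [hc (by simpa using hmem)]))
    simpa [mul_assoc] using this

/-- The list form of `RedWord`, as needed for Britton's lemma. Leaving the base-group element `c`
after the last letter arbitrary is what makes concatenation work. -/
theorem RedWord.exists_list {u v : ℤˣ} {g : HNNExtension G A B φ} (h : RedWord φ u v g) :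
    ∃ L : List (ℤˣ × G), ∀ c : G,
      (L ++ [(v, c)]).IsChain (fun a b => a.2 ∈ toSubgroup A B a.1 → a.1 = b.1) ∧
      ((L ++ [(v, c)]).head?.map Prod.fst = some u) ∧
      ((L ++ [(v, c)]).map (fun x => (t : HNNExtension G A B φ) ^ (x.1 : ℤ) * of x.2)).prod
        = g * of c := by
  induction h with
  | letter u => exact ⟨[], fun c => by simp⟩
  | @glue u v u' v' g h c _ _ hc ihg ihh =>
    obtain ⟨L₁, h₁⟩ := ihg
    obtain ⟨L₂, h₂⟩ := ihh
    refine ⟨(L₁ ++ [(v, c)]) ++ L₂, fun d => ⟨?_, ?_, ?_⟩⟩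
    · rw [List.append_assoc]
      refine (h₁ c).1.append (h₂ d).1 ?_
      intro a ha b hb
      have ha' : a = (v, c) := by simpa using ha.symm
      have hb' : b.1 = u' := by
        have := (h₂ d).2.1
        rw [Option.mem_def.1 hb] at this
        simpa using this
      subst ha'
      rw [hb']
      exact hc
    · rw [List.append_assoc, List.head?_append_of_ne_nil _ (by simp)]
      exact (h₁ c).2.1
    · rw [List.append_assoc, List.map_append, List.prod_append, (h₁ c).2.2, (h₂ d).2.2]
      simp [mul_assoc]

theorem RedWord.ne_one {u v : ℤˣ} {g : HNNExtension G A B φ} (h : RedWord φ u v g) : g ≠ 1 := by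
  rintro rfl
  obtain ⟨L, hL⟩ := h.exists_list
  have := ReducedWord.toList_eq_nil_of_mem_of_range φ
    (⟨1, L ++ [(v, 1)], (hL 1).1⟩ : ReducedWord G A B)
    ⟨1, by simpa [ReducedWord.prod] using (hL 1).2.2.symm⟩
  simp at this

theorem exists_redWord_mem_derivedSeries {a b : G} (ha : a ∉ A) (hb : b ∉ B) (k : ℕ) :
    ∃ g ∈ derivedSeries (HNNExtension G A B φ) k, RedWord φ 1 (-1) g := by
  induction k with
  | zero => exact ⟨_, Subgroup.mem_top _, .glue a (.letter 1) (.letter (-1)) (by simp [ha])⟩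
  | succ k ih =>
    obtain ⟨g, hg, hr⟩ := ih
    have hr' : RedWord φ 1 (-1) g⁻¹ := by simpa using hr.inv
    refine ⟨t * ⁅g, of b * g * (of b)⁻¹⁆ * t⁻¹, ?_, ?_⟩
    · refine (derivedSeries_normal _ _).conj_mem _ ?_ _
      exact Subgroup.commutator_mem_commutator hg ((derivedSeries_normal _ _).conj_mem _ hg _)
    · have h₁ := RedWord.glue 1 (.letter 1) hr (by simp)
      have h₂ := h₁.glue b hr (by simp [hb])
      have h₃ := h₂.glue b⁻¹ hr' (by simp [hb])
      have h₄ := h₃.glue b hr' (by simp [hb])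
      have h₅ := h₄.glue b⁻¹ (.letter (-1)) (by simp)
      simpa [commutatorElement_def, mul_assoc] using h₅

/-- An HNN extension in which both associated subgroups are proper is not solvable. -/
theorem not_isSolvable {a b : G} (ha : a ∉ A) (hb : b ∉ B) :
    ¬ Group.IsSolvable (HNNExtension G A B φ) := by
  rintro ⟨k, hk⟩
  obtain ⟨g, hg, hr⟩ := exists_redWord_mem_derivedSeries (φ := φ) ha hb k
  exact hr.ne_one (by simpa [hk] using hg)

end HNNExtension

theorem BS.closure_eq_top (m n : ℤ) : Subgroup.closure {BS.x m n, BS.t m n} = ⊤ := by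
  rw [eq_top_iff]
  refine (PresentedGroup.closure_range_of (bsRels m n)).ge.trans ((Subgroup.closure_le _).2 ?_)
  rintro _ ⟨b, rfl⟩
  cases b
  · exact Subgroup.subset_closure (Or.inr rfl)
  · exact Subgroup.subset_closure (Or.inl rfl)

theorem BS.rel (m n : ℤ) : (BS.t m n)⁻¹ * BS.x m n ^ m * BS.t m n = BS.x m n ^ n := by
  have h : PresentedGroup.mk (bsRels m n) _ = 1 := PresentedGroup.one_of_mem (Set.mem_singleton _)
  simp only [map_mul, map_inv, map_zpow, zpow_neg] at h
  exact mul_inv_eq_one.1 h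

/-- A group generated by `x` and `t` with `x` a power of `t⁻¹ x t` is solvable: the conjugates
`t^k x t^{-k}` commute, and generate a normal subgroup with cyclic quotient. -/
theorem isSolvable_of_mem_zpowers_conj {G : Type*} [Group G] {x t : G}
    (hgen : Subgroup.closure {x, t} = ⊤) (hx : x ∈ Subgroup.zpowers (t⁻¹ * x * t)) :
    Group.IsSolvable G := by
  let c : ℤ → G := fun k => t ^ k * x * (t ^ k)⁻¹
  have hct (j k : ℤ) : t ^ j * c k * (t ^ j)⁻¹ = c (j + k) := by
    simp only [c, zpow_add]; group
  -- `c k` is a power of `c j` as soon as `j ≤ k`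
  have hpow (k : ℤ) (d : ℕ) : ∃ e : ℤ, c k = c (k - d) ^ e := by
    induction d with
    | zero => exact ⟨1, by simp⟩
    | succ d ih =>
      obtain ⟨e, he⟩ := ih
      obtain ⟨f, hf⟩ := Subgroup.mem_zpowers_iff.1 hx
      have hf' : c (k - d) = c (k - (d + 1 : ℕ)) ^ f := by
        rw [show c (k - (d + 1 : ℕ)) = t ^ (k - d) * (t⁻¹ * x * t) * (t ^ (k - d))⁻¹ by
          rw [show k - ((d + 1 : ℕ) : ℤ) = (k - d) + (-1) by push_cast; ring]
          simp only [c, zpow_add]; group, conj_zpow, hf]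
      exact ⟨f * e, by rw [he, hf', zpow_mul]⟩
  have hle {j k : ℤ} (h : j ≤ k) : Commute (c j) (c k) := by
    obtain ⟨e, he⟩ := hpow k (k - j).toNat
    rw [show k - ((k - j).toNat : ℤ) = j by omega] at he
    rw [he]
    exact (Commute.refl _).zpow_right _
  have hcomm (j k : ℤ) : Commute (c j) (c k) :=
    (le_total j k).elim hle fun h => (hle h).symm
  let N : Subgroup G := Subgroup.closure (Set.range c)
  have hxN : x ∈ N := Subgroup.subset_closure ⟨0, by simp [c]⟩
  have hconj (j : ℤ) {g : G} (hg : g ∈ N) : t ^ j * g * (t ^ j)⁻¹ ∈ N := by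
    have : N ≤ N.comap (MulAut.conj (t ^ j)).toMonoidHom := by
      rw [Subgroup.closure_le]
      rintro _ ⟨k, rfl⟩
      exact Subgroup.subset_closure ⟨j + k, (hct j k).symm⟩
    exact this hg
  have hN : N.Normal := by
    rw [← Subgroup.normalizer_eq_top_iff, eq_top_iff, ← hgen, Subgroup.closure_le]
    rintro _ (rfl | rfl)
    · exact Subgroup.le_normalizer hxN
    · refine Subgroup.mem_normalizer_iff.2 fun g => ⟨fun hg => by simpa using hconj 1 hg, ?_⟩
      intro hg
      simpa [mul_assoc] using hconj (-1) hg
  have hNsolv : Group.IsSolvable N := by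
    have := Subgroup.isMulCommutative_closure (k := Set.range c) (by
      rintro _ ⟨j, rfl⟩ _ ⟨k, rfl⟩
      exact hcomm j k)
    exact Group.isSolvable_of_comm fun a b => this.is_comm.comm a b
  have hQ : Group.IsSolvable (G ⧸ N) := by
    have htop : Subgroup.zpowers (QuotientGroup.mk' N t) = ⊤ := by
      rw [eq_top_iff, ← MonoidHom.range_eq_top.2 (QuotientGroup.mk'_surjective N),
        MonoidHom.range_eq_map, ← hgen, MonoidHom.map_closure, Subgroup.closure_le]
      rintro _ ⟨_, rfl | rfl, rfl⟩
      · rw [show QuotientGroup.mk' N _ = 1 from (QuotientGroup.eq_one_iff _).2 hxN]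
        exact one_mem _
      · exact Subgroup.mem_zpowers _
    refine Group.isSolvable_of_comm fun a b => ?_
    obtain ⟨i, rfl⟩ := Subgroup.mem_zpowers_iff.1 (htop ▸ Subgroup.mem_top a)
    obtain ⟨j, rfl⟩ := Subgroup.mem_zpowers_iff.1 (htop ▸ Subgroup.mem_top b)
    exact (Commute.refl _).zpow_zpow i j
  exact (Group.isSolvable_iff_subgroup_quotient N).2 ⟨hNsolv, hQ⟩

theorem mem_zpowers_of_zpow_eq {G : Type*} [Group G] {x y : G} {i j : ℤ} (hj : |j| = 1)
    (h : y ^ i = x ^ j) : x ∈ Subgroup.zpowers y := by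
  rcases eq_or_eq_neg_of_abs_eq hj with rfl | rfl
  · exact ⟨i, by simpa using h⟩
  · exact ⟨-i, by simp [h]⟩

theorem BS.isSolvable_of_abs_right (m : ℤ) {n : ℤ} (hn : |n| = 1) : Group.IsSolvable (BS m n) := by
  refine isSolvable_of_mem_zpowers_conj (BS.closure_eq_top m n)
    (mem_zpowers_of_zpow_eq (i := m) hn ?_)
  have := conj_zpow (i := m) (a := (BS.t m n)⁻¹) (b := BS.x m n)
  rw [inv_inv] at this
  rw [this, BS.rel]

theorem BS.isSolvable_of_abs_left {m : ℤ} (n : ℤ) (hm : |m| = 1) : Group.IsSolvable (BS m n) := by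
  have hgen : Subgroup.closure {BS.x m n, (BS.t m n)⁻¹} = ⊤ := by
    rw [eq_top_iff, ← BS.closure_eq_top m n, Subgroup.closure_le]
    rintro _ (rfl | rfl)
    · exact Subgroup.subset_closure (Or.inl rfl)
    · exact inv_mem_iff.1 (Subgroup.subset_closure (Or.inr rfl))
  refine isSolvable_of_mem_zpowers_conj hgen (mem_zpowers_of_zpow_eq (i := n) hm ?_)
  rw [inv_inv, conj_zpow, ← BS.rel]
  group

/-- Multiplication by `k ≠ 0` on `ℤ`, written multiplicatively, as an isomorphism onto `kℤ`. -/
noncomputable def mulIso {k : ℤ} (hk : k ≠ 0) :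
    Multiplicative ℤ ≃* (zpowGroupHom k : Multiplicative ℤ →* Multiplicative ℤ).range :=
  MonoidHom.ofInjective fun a b h => by
    have h' : k * a.toAdd = k * b.toAdd := by
      simpa using congrArg Multiplicative.toAdd h
    exact Multiplicative.toAdd.injective (mul_left_cancel₀ hk h')

theorem ofAdd_one_notMem_range {k : ℤ} (hk : |k| ≠ 1) :
    Multiplicative.ofAdd (1 : ℤ) ∉
      (zpowGroupHom k : Multiplicative ℤ →* Multiplicative ℤ).range := by
  rintro ⟨a, ha⟩
  have h' : k * a.toAdd = 1 := by simpa using congrArg Multiplicative.toAdd ha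
  exact hk (Int.isUnit_iff_abs_eq.1 (IsUnit.of_mul_eq_one _ h'))

theorem BS.not_isSolvable {m n : ℤ} (hm : m ≠ 0) (hn : n ≠ 0) (hm1 : |m| ≠ 1) (hn1 : |n| ≠ 1) :
    ¬ Group.IsSolvable (BS m n) := by
  intro hs
  let φ := (mulIso hn).symm.trans (mulIso hm)
  let X : HNNExtension _ _ _ φ := HNNExtension.of (Multiplicative.ofAdd 1)
  let s : HNNExtension _ _ _ φ := HNNExtension.t
  have hrel : s * X ^ n * s⁻¹ = X ^ m := by
    have h := HNNExtension.equiv_eq_conj (φ := φ) (mulIso hn (Multiplicative.ofAdd 1))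
    rw [show φ (mulIso hn (Multiplicative.ofAdd 1)) = mulIso hm (Multiplicative.ofAdd 1) by
      simp [φ]] at h
    have hcoe {k : ℤ} (hk : k ≠ 0) :
        ((mulIso hk (Multiplicative.ofAdd 1) : _) : Multiplicative ℤ)
          = Multiplicative.ofAdd 1 ^ k := rfl
    rw [hcoe, hcoe, map_zpow, map_zpow] at h
    exact h.symm
  let gens : Bool → HNNExtension _ _ _ φ := fun b => if b then X else s
  have hg : ∀ r ∈ bsRels m n, FreeGroup.lift gens r = 1 := by
    rintro _ rfl
    simp [gens, ← hrel, mul_assoc]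
  let f : BS m n →* HNNExtension _ _ _ φ := PresentedGroup.toGroup hg
  have hfx : f (BS.x m n) = X := PresentedGroup.toGroup.of hg (x := true)
  have hft : f (BS.t m n) = s := PresentedGroup.toGroup.of hg (x := false)
  have hf : Function.Surjective f := by
    intro y
    change y ∈ f.range
    induction y using HNNExtension.induction_on with
    | of g =>
      refine ⟨BS.x m n ^ g.toAdd, ?_⟩
      rw [map_zpow, hfx, ← map_zpow]
      congr 1
      rw [← ofAdd_zsmul]
      simp
    | t => exact ⟨BS.t m n, hft⟩
    | mul x y hx hy => exact mul_mem hx hy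
    | inv x hx => exact inv_mem hx
  exact HNNExtension.not_isSolvable (φ := φ) (ofAdd_one_notMem_range hn1)
    (ofAdd_one_notMem_range hm1) (Group.isSolvable_of_surjective hf)

/-- `BS(m,n)` is solvable iff `min(|m|, |n|) = 1`. -/
theorem bs_solvable_iff (m n : ℤ) (hm : m ≠ 0) (hn : n ≠ 0) :
    IsSolvable (BS m n) ↔ min |m| |n| = 1 := by
  have hm' : 1 ≤ |m| := Int.one_le_abs hm
  have hn' : 1 ≤ |n| := Int.one_le_abs hn
  constructor
  · intro hs
    by_contra h
    exact BS.not_isSolvable hm hn (by omega) (by omega) hs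
  · intro h
    rcases (by omega : |m| = 1 ∨ |n| = 1) with h | h
    · exact BS.isSolvable_of_abs_left n h
    · exact BS.isSolvable_of_abs_right m h
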